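/- Let m be a nonnegative integer and n a positive integer with n ≡ 3 (mod 4). Then Φ_n(q)^2 divides (in the localization of ℚ[q] at Φ_n(q)) the sum over k from 0 to mn+(n-1)/2 of (1+q^{4k+1})(q^2;q^4)_k^3 / ((1+q)(q^4;q^4)_k^3) · q^k. -/

import Mathlib

open Polynomial Finset

/-- The variable `q` as an element of the field of rational functions `ℚ(q)`. -/
noncomputable def Q : RatFunc ℚ := RatFunc.X

/-- The q-shifted factorial `(a;b)_k = (1-a)(1-ab)⋯(1-ab^{k-1})` in `ℚ(q)`. -/
noncomputable def qPoch (a b : RatFunc ℚ) (k : ℕ) : RatFunc ℚ :=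
  ∏ i ∈ Finset.range k, (1 - a * b ^ i)


section Dixon
variable {K : Type*} [Field K]

/-- Ratio of consecutive (reduced) terms of the terminating q-Dixon sum. -/
def dRho (s w p P : K) (i : ℕ) : K :=
  (1 - s ^ 2 * p ^ i) * (P - p ^ i) * (w - s * p ^ i) * p /
    ((1 - p ^ (i + 1)) * (1 - s ^ 2 * P * p ^ (i + 1)) * (1 - s * w * p ^ (i + 1)))

def dB (s w p P : K) (i : ℕ) : K :=
  (1 - s ^ 2 * p ^ i) * (P - p ^ i) * (w - s * p ^ i) * p /
    ((1 - p ^ (i + 1)) * (1 - s ^ 2 * P * p ^ (i + 2)) * (1 - s * w * p ^ (i + 1)))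

def dT (s w p P : K) (r : ℕ) : K := (1 + s * p ^ r) * ∏ i ∈ range r, dRho s w p P i

lemma dRho_prod (s w p P : K) (h2 : ∀ i : ℕ, 1 - s ^ 2 * P * p ^ (i + 1) ≠ 0) (r : ℕ) :
    ∏ i ∈ range r, dRho s w p P i =
      (∏ i ∈ range r, dB s w p P i) * (1 - s ^ 2 * P * p ^ (r + 1)) / (1 - s ^ 2 * P * p) := by
  have h0 : 1 - s ^ 2 * P * p ≠ 0 := by simpa using h2 0
  induction r with
  | zero => simp [h0]
  | succ r ih =>
    rw [prod_range_succ, ih, prod_range_succ, dRho, dB]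
    have ha := h2 r
    have hb := h2 (r + 1)
    rw [show r + 1 + 1 = r + 2 from rfl] at *
    have : (1 - s ^ 2 * P * p ^ (r + 1)) / (1 - s ^ 2 * P * p ^ (r + 1)) = 1 := div_self ha
    have : (1 - s ^ 2 * P * p ^ (r + 2)) / (1 - s ^ 2 * P * p ^ (r + 2)) = 1 := div_self hb
    simp only [div_eq_mul_inv, mul_inv] at *
    generalize ∏ i ∈ range r, dB s w p P i = Z
    grind

lemma dRho_prod' (s w p P : K) (h1 : ∀ i : ℕ, 1 - p ^ (i + 1) ≠ 0)
    (h2 : ∀ i : ℕ, 1 - s ^ 2 * P * p ^ (i + 1) ≠ 0)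
    (h3 : ∀ i : ℕ, 1 - s * w * p ^ (i + 1) ≠ 0) (r : ℕ) :
    ∏ i ∈ range (r + 1), dRho s w p (P * p) i =
      (∏ i ∈ range r, dB s w p P i) *
      ((1 - s ^ 2 * p ^ r) * (w - s * p ^ r) * p * (P * p - 1) * p ^ r /
       ((1 - p ^ (r + 1)) * (1 - s ^ 2 * P * p ^ (r + 2)) * (1 - s * w * p ^ (r + 1)))) := by
  induction r with
  | zero => simp [dRho]; ring
  | succ r ih =>
    rw [prod_range_succ, ih, prod_range_succ _ r, dRho, dB]
    generalize ∏ i ∈ range r, dB s w p P i = Z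
    have e1 := h1 r
    have e2 := h1 (r+1)
    have e3 := h2 (r+1)
    have e4 := h2 (r+2)
    have e5 := h3 r
    have e6 := h3 (r+1)
    have e7 : 1 - s ^ 2 * (P * p) * p ^ (r + 1 + 1) ≠ 0 := by
      convert e4 using 2; ring
    rw [show 1 - s ^ 2 * (P * p) * p ^ (r + 1 + 1) = 1 - s ^ 2 * P * p ^ (r + 1 + 2) by ring]
    rw [show r + 2 + 1 = r + 1 + 2 from rfl] at e4
    rw [show r + 1 + 1 = r + 2 from rfl] at *
    generalize hA : 1 - s ^ 2 * P * p ^ (r + 1 + 2) = A at *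
    generalize hB : 1 - s ^ 2 * P * p ^ (r + 2) = B at *
    generalize hC : 1 - p ^ (r + 1) = C at *
    generalize hD : 1 - p ^ (r + 2) = D at *
    generalize hE : 1 - s * w * p ^ (r + 1) = E at *
    generalize hF : 1 - s * w * p ^ (r + 2) = F at *
    field_simp
    ring

lemma dT_tele (s w p P : K) (h1 : ∀ i : ℕ, 1 - p ^ (i + 1) ≠ 0)
    (h2 : ∀ i : ℕ, 1 - s ^ 2 * P * p ^ (i + 1) ≠ 0)
    (h3 : ∀ i : ℕ, 1 - s * w * p ^ (i + 1) ≠ 0) (r : ℕ) :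
    (1 - s * w * (P * p)) * (1 - s * (P * p)) * ∑ i ∈ range (r + 1), dT s w p (P * p) i
    - (1 - s ^ 2 * (P * p)) * (1 - w * (P * p)) * ∑ i ∈ range (r + 1), dT s w p P i
    = (∏ i ∈ range r, dB s w p P i) * (P * p * (1 - s ^ 2 * p ^ r) * (w - s * p ^ r)) := by
  induction r with
  | zero => simp [dT]; ring
  | succ r ih =>
    rw [sum_range_succ, sum_range_succ _ (r + 1), dT, dT, dRho_prod' s w p P h1 h2 h3,
      dRho_prod s w p P h2 (r + 1), prod_range_succ _ r, dB]
    generalize ∏ i ∈ range r, dB s w p P i = Z at *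
    have key : ∀ a b S1 S2 x y R R' : K, a * S1 - b * S2 = R → a * x - b * y = R' - R →
        a * (S1 + x) - b * (S2 + y) = R' := by
      intro a b S1 S2 x y R R' h h'
      linear_combination h + h'
    refine key _ _ _ _ _ _ _ _ ih ?_
    have e0 : 1 - s ^ 2 * P * p ≠ 0 := by simpa using h2 0
    have e1 := h1 r
    have e3 := h2 (r+1)
    have e5 := h3 r
    rw [show r + 1 + 1 = r + 2 from rfl] at *
    rw [show 1 - s ^ 2 * (P * p) = 1 - s ^ 2 * P * p by ring]
    field_simp
    ring

lemma dixon (s w p : K) (h1 : ∀ i : ℕ, 1 - p ^ (i + 1) ≠ 0)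
    (h2 : ∀ i : ℕ, 1 - s ^ 2 * p ^ (i + 1) ≠ 0)
    (h3 : ∀ i : ℕ, 1 - s * w * p ^ (i + 1) ≠ 0)
    (h4 : ∀ i : ℕ, 1 - s * p ^ (i + 1) ≠ 0) (N : ℕ) :
    ∑ i ∈ range (N + 1), dT s w p (p ^ N) i =
      (1 + s) * ∏ i ∈ range N, ((1 - s ^ 2 * p ^ (i + 1)) * (1 - w * p ^ (i + 1)) /
        ((1 - s * w * p ^ (i + 1)) * (1 - s * p ^ (i + 1)))) := by
  induction N with
  | zero => simp [dT]
  | succ N ih =>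
    have h2' : ∀ i : ℕ, 1 - s ^ 2 * p ^ N * p ^ (i + 1) ≠ 0 := by
      intro i
      have := h2 (N + i)
      convert this using 2
      ring
    have ht := dT_tele s w p (p ^ N) h1 h2' h3 (N + 1)
    have hz : dT s w p (p ^ N) (N + 1) = 0 := by
      rw [dT, prod_range_succ, dRho]; simp
    have hz' : ∏ i ∈ range (N + 1), dB s w p (p ^ N) i = 0 := by
      rw [prod_range_succ, dB]; simp
    have hs : ∑ i ∈ range (N + 1 + 1), dT s w p (p ^ N) i =
        ∑ i ∈ range (N + 1), dT s w p (p ^ N) i := by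
      rw [sum_range_succ, hz, add_zero]
    rw [hs, hz', zero_mul, ih, ← pow_succ] at ht
    rw [prod_range_succ]
    generalize ∑ i ∈ range (N + 1 + 1), dT s w p (p ^ (N + 1)) i = Y at *
    have e3 := h3 N
    have e4 := h4 N
    generalize ∏ i ∈ range N, ((1 - s ^ 2 * p ^ (i + 1)) * (1 - w * p ^ (i + 1)) /
        ((1 - s * w * p ^ (i + 1)) * (1 - s * p ^ (i + 1)))) = Z at *
    generalize 1 - s * w * p ^ (N + 1) = A at *
    generalize 1 - s * p ^ (N + 1) = B at *
    field_simp
    linear_combination ht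
end Dixon

/-- `f` has `Φ_n`-adic valuation at least `k`. -/
def Dv (n k : ℕ) (f : RatFunc ℚ) : Prop :=
  ∃ a b : ℚ[X], ¬ (cyclotomic n ℚ ∣ b) ∧
    f * algebraMap ℚ[X] (RatFunc ℚ) b = algebraMap ℚ[X] (RatFunc ℚ) (cyclotomic n ℚ ^ k * a)

section Loc
variable {n : ℕ} (hn : 0 < n)
include hn

lemma cyc_prime : Prime (cyclotomic n ℚ) := (cyclotomic.irreducible_rat hn).prime

lemma Dv.add {k : ℕ} {f g : RatFunc ℚ} (hf : Dv n k f) (hg : Dv n k g) : Dv n k (f + g) := by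
  obtain ⟨a, b, hb, h1⟩ := hf
  obtain ⟨c, d, hd, h2⟩ := hg
  refine ⟨a * d + c * b, b * d, fun h => ((cyc_prime hn).dvd_or_dvd h).elim hb hd, ?_⟩
  simp only [map_mul, map_add] at *
  linear_combination algebraMap ℚ[X] (RatFunc ℚ) d * h1 + algebraMap ℚ[X] (RatFunc ℚ) b * h2

lemma Dv.mul {k l : ℕ} {f g : RatFunc ℚ} (hf : Dv n k f) (hg : Dv n l g) :
    Dv n (k + l) (f * g) := by
  obtain ⟨a, b, hb, h1⟩ := hf
  obtain ⟨c, d, hd, h2⟩ := hg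
  refine ⟨a * c, b * d, fun h => ((cyc_prime hn).dvd_or_dvd h).elim hb hd, ?_⟩
  rw [map_mul, show f * g * (algebraMap ℚ[X] (RatFunc ℚ) b * algebraMap ℚ[X] (RatFunc ℚ) d) =
    (f * algebraMap ℚ[X] (RatFunc ℚ) b) * (g * algebraMap ℚ[X] (RatFunc ℚ) d) by ring, h1, h2,
    ← map_mul]
  congr 1
  ring

lemma Dv.mul0 {k : ℕ} {f g : RatFunc ℚ} (hf : Dv n k f) (hg : Dv n 0 g) : Dv n k (f * g) := by
  have := Dv.mul hn hf hg
  rwa [add_zero] at this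

lemma Dv.zmul {k : ℕ} {f g : RatFunc ℚ} (hf : Dv n 0 f) (hg : Dv n k g) : Dv n k (f * g) := by
  have := Dv.mul hn hf hg
  rwa [zero_add] at this

lemma Dv.poly (f : ℚ[X]) : Dv n 0 (algebraMap ℚ[X] (RatFunc ℚ) f) :=
  ⟨f, 1, fun h => (cyc_prime hn).not_isUnit (isUnit_of_dvd_one h), by simp⟩

omit hn in
lemma Dv.polyInv (f : ℚ[X]) (hf : ¬ cyclotomic n ℚ ∣ f) :
    Dv n 0 (algebraMap ℚ[X] (RatFunc ℚ) f)⁻¹ := by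
  refine ⟨1, f, hf, ?_⟩
  have : algebraMap ℚ[X] (RatFunc ℚ) f ≠ 0 := by
    rw [Ne, FaithfulSMul.algebraMap_eq_zero_iff]
    rintro rfl; exact hf (dvd_zero _)
  simp [this]

lemma Dv.one : Dv n 0 (1 : RatFunc ℚ) := by simpa using Dv.poly hn 1

lemma Dv.zero (k : ℕ) : Dv n k (0 : RatFunc ℚ) :=
  ⟨0, 1, fun h => (cyc_prime hn).not_isUnit (isUnit_of_dvd_one h), by simp⟩

lemma Dv.neg {k : ℕ} {f : RatFunc ℚ} (hf : Dv n k f) : Dv n k (-f) := by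
  have h : Dv n 0 (-1 : RatFunc ℚ) := by simpa using Dv.poly hn (-1)
  simpa using Dv.zmul hn h hf

lemma Dv.sub {k : ℕ} {f g : RatFunc ℚ} (hf : Dv n k f) (hg : Dv n k g) : Dv n k (f - g) := by
  rw [sub_eq_add_neg]; exact Dv.add hn hf (Dv.neg hn hg)

lemma Dv.pow {f : RatFunc ℚ} (hf : Dv n 0 f) (m : ℕ) : Dv n 0 (f ^ m) := by
  induction m with
  | zero => simpa using Dv.one hn
  | succ m ih => rw [pow_succ]; exact Dv.mul0 hn ih hf

omit hn in
lemma Dv.succ_le {k : ℕ} {f : RatFunc ℚ} (hf : Dv n (k + 1) f) : Dv n k f := by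
  obtain ⟨a, b, hb, h1⟩ := hf
  refine ⟨cyclotomic n ℚ * a, b, hb, ?_⟩
  rw [h1]; congr 1; ring

lemma Dv.sum {k : ℕ} {f : ℕ → RatFunc ℚ} {s : Finset ℕ} (hf : ∀ i ∈ s, Dv n k (f i)) :
    Dv n k (∑ i ∈ s, f i) := by
  induction s using Finset.induction_on with
  | empty => simpa using Dv.zero hn k
  | insert a s ha ih =>
    rw [sum_insert ha]
    exact Dv.add hn (hf a (mem_insert_self _ _)) (ih fun i hi => hf i (mem_insert_of_mem hi))

lemma Dv.prod {f : ℕ → RatFunc ℚ} {s : Finset ℕ} (hf : ∀ i ∈ s, Dv n 0 (f i)) :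
    Dv n 0 (∏ i ∈ s, f i) := by
  induction s using Finset.induction_on with
  | empty => simpa using Dv.one hn
  | insert a s ha ih =>
    rw [prod_insert ha]
    exact Dv.mul0 hn (hf a (mem_insert_self _ _)) (ih fun i hi => hf i (mem_insert_of_mem hi))

lemma Dv.prod1 {f : ℕ → RatFunc ℚ} {s : Finset ℕ} (hf : ∀ i ∈ s, Dv n 0 (f i))
    (i₀ : ℕ) (hi : i₀ ∈ s) (h1 : Dv n 1 (f i₀)) :
    Dv n 1 (∏ i ∈ s, f i) := by
  rw [← mul_prod_erase s f hi]
  exact Dv.mul0 hn h1 (Dv.prod hn fun i hi => hf i (mem_of_mem_erase hi))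

lemma cyc_dvd {e : ℕ} : cyclotomic n ℚ ∣ 1 - X ^ e ↔ n ∣ e := by
  constructor
  · intro h
    have hz := Complex.isPrimitiveRoot_exp n hn.ne'
    have h0 : aeval (Complex.exp (2 * Real.pi * Complex.I / n)) (cyclotomic n ℚ) = 0 := by
      have := hz.isRoot_cyclotomic hn
      rw [IsRoot, ← map_cyclotomic n (algebraMap ℚ ℂ), eval_map_algebraMap] at this
      exact this
    obtain ⟨g, hg⟩ := h
    have := congrArg (aeval (Complex.exp (2 * Real.pi * Complex.I / n))) hg
    rw [map_mul, h0, zero_mul] at this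
    simp only [map_sub, map_one, map_pow, aeval_X] at this
    exact hz.dvd_of_pow_eq_one _ (sub_eq_zero.mp this).symm
  · rintro ⟨c, rfl⟩
    refine (cyclotomic.dvd_X_pow_sub_one n ℚ).trans ?_
    have := sub_dvd_pow_sub_pow ((X : ℚ[X]) ^ n) 1 c
    rw [one_pow, ← pow_mul] at this
    have h2 : (1 : ℚ[X]) - X ^ (n * c) = -(X ^ (n * c) - 1) := by ring
    rw [h2]
    exact (dvd_neg).mpr this

lemma cyc_not_sq {e : ℕ} (he : e ≠ 0) : ¬ cyclotomic n ℚ * cyclotomic n ℚ ∣ 1 - X ^ e := by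
  intro h
  have hs : ((X : ℚ[X]) ^ e - 1).Separable := by
    rw [X_pow_sub_one_separable_iff]; exact_mod_cast he
  have h' : cyclotomic n ℚ * cyclotomic n ℚ ∣ X ^ e - 1 := by
    rw [← neg_sub]; exact (dvd_neg).mpr h
  exact (cyc_prime hn).not_isUnit (hs.squarefree _ h')

omit hn in
lemma Qne : Q ≠ 0 := RatFunc.X_ne_zero

omit hn in
lemma Qpow (e : ℕ) : 1 - Q ^ e = algebraMap ℚ[X] (RatFunc ℚ) (1 - X ^ e) := by
  simp [Q]

lemma Dv.Qinv : Dv n 0 (Q⁻¹) := by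
  have : Q = algebraMap ℚ[X] (RatFunc ℚ) X := by simp [Q]
  rw [this]
  apply Dv.polyInv
  intro h
  have h1 : cyclotomic n ℚ ∣ 1 - X ^ n := (cyc_dvd hn).mpr dvd_rfl
  have h2 : cyclotomic n ℚ ∣ X ^ n := h.trans (dvd_pow_self _ hn.ne')
  have := dvd_add h1 h2
  rw [sub_add_cancel] at this
  exact (cyc_prime hn).not_isUnit (isUnit_of_dvd_one this)

lemma Dv.Q : Dv n 0 Q := by
  have : _root_.Q = algebraMap ℚ[X] (RatFunc ℚ) X := by simp [_root_.Q]
  rw [this]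
  exact Dv.poly hn _

lemma Dv.Qz (e : ℤ) : Dv n 0 (_root_.Q ^ e) := by
  rcases e.eq_nat_or_neg with ⟨m, rfl | rfl⟩
  · rw [zpow_natCast]; exact Dv.pow hn (Dv.Q hn) m
  · rw [zpow_neg, zpow_natCast, ← inv_pow]; exact Dv.pow hn (Dv.Qinv hn) m

omit hn in
lemma Qz_neg (m : ℕ) : 1 - Q ^ (-(m : ℤ)) = - Q ^ (-(m : ℤ)) * (1 - Q ^ m) := by
  have := pow_ne_zero m Qne
  rw [zpow_neg, zpow_natCast]
  field_simp
  ring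

omit hn in
lemma Qz_ne {e : ℤ} (he : e ≠ 0) : 1 - Q ^ e ≠ 0 := by
  have key : ∀ m : ℕ, m ≠ 0 → 1 - Q ^ m ≠ 0 := by
    intro m hm
    rw [Qpow, Ne, FaithfulSMul.algebraMap_eq_zero_iff]
    intro h
    have : (X ^ m : ℚ[X]).natDegree = (1 : ℚ[X]).natDegree := by rw [sub_eq_zero.mp h]
    simp at this
    exact hm this
  rcases e.eq_nat_or_neg with ⟨m, rfl | rfl⟩
  · rw [zpow_natCast]; exact key m (by simpa using he)
  · rw [Qz_neg]
    exact mul_ne_zero (neg_ne_zero.mpr (zpow_ne_zero _ Qne)) (key m (by simpa using he))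

lemma Dv.sub1 {e : ℤ} (he : (n : ℤ) ∣ e) : Dv n 1 (1 - _root_.Q ^ e) := by
  have key : ∀ m : ℕ, n ∣ m → Dv n 1 (1 - _root_.Q ^ m) := by
    intro m hm
    obtain ⟨g, hg⟩ := (cyc_dvd hn).mpr hm
    rw [Qpow, hg]
    exact ⟨g, 1, fun h => (cyc_prime hn).not_isUnit (isUnit_of_dvd_one h), by simp⟩
  rcases e.eq_nat_or_neg with ⟨m, rfl | rfl⟩
  · rw [zpow_natCast]; exact key m (by exact_mod_cast he)
  · rw [Qz_neg]
    exact Dv.zmul hn (Dv.neg hn (Dv.Qz hn _))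
      (key m (by rw [dvd_neg] at he; exact_mod_cast he))

lemma Dv.sub0 (e : ℤ) : Dv n 0 (1 - _root_.Q ^ e) :=
  Dv.sub hn (Dv.one hn) (Dv.Qz hn e)

lemma Dv.subInv {e : ℤ} (he : ¬ (n : ℤ) ∣ e) : Dv n 0 (1 - _root_.Q ^ e)⁻¹ := by
  have key : ∀ m : ℕ, ¬ n ∣ m → Dv n 0 (1 - _root_.Q ^ m)⁻¹ := by
    intro m hm
    rw [Qpow]
    exact Dv.polyInv _ (fun h => hm ((cyc_dvd hn).mp h))
  rcases e.eq_nat_or_neg with ⟨m, rfl | rfl⟩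
  · rw [zpow_natCast]; exact key m (by exact_mod_cast he)
  · rw [Qz_neg, mul_inv, inv_neg, ← zpow_neg]
    exact Dv.zmul hn (Dv.neg hn (Dv.Qz hn _))
      (key m (by rw [dvd_neg] at he; exact_mod_cast he))

lemma Dv.divSub {m : ℕ} (hm : m ≠ 0) (hd : n ∣ m) {f : RatFunc ℚ} (hf : Dv n 1 f) :
    Dv n 0 (f * (1 - _root_.Q ^ m)⁻¹) := by
  obtain ⟨g, hg⟩ := (cyc_dvd hn).mpr hd
  have hg' : ¬ cyclotomic n ℚ ∣ g := by
    intro h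
    apply cyc_not_sq hn hm
    rw [hg]
    exact mul_dvd_mul dvd_rfl h
  have hne : 1 - _root_.Q ^ m ≠ 0 := by
    have := Qz_ne (e := m) (by exact_mod_cast hm)
    rwa [zpow_natCast] at this
  obtain ⟨a, b, hb, h1⟩ := hf
  refine ⟨a, b * g, fun h => ((cyc_prime hn).dvd_or_dvd h).elim hb hg', ?_⟩
  rw [Qpow, hg] at *
  rw [map_mul] at hne ⊢
  rw [pow_one, map_mul] at h1
  rw [pow_zero, one_mul, map_mul]
  have hc := left_ne_zero_of_mul hne
  have hd := right_ne_zero_of_mul hne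
  field_simp
  linear_combination h1

/-- congruence modulo `Φ_n ^ 2` between integral elements -/
def Cg (n : ℕ) (f g : RatFunc ℚ) : Prop := Dv n 0 f ∧ Dv n 0 g ∧ Dv n 2 (f - g)

lemma Cg.refl {f : RatFunc ℚ} (hf : Dv n 0 f) : Cg n f f := ⟨hf, hf, by simpa using Dv.zero hn 2⟩

lemma Cg.mul {f g f' g' : RatFunc ℚ} (h : Cg n f g) (h' : Cg n f' g') :
    Cg n (f * f') (g * g') := by
  refine ⟨Dv.mul0 hn h.1 h'.1, Dv.mul0 hn h.2.1 h'.2.1, ?_⟩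
  rw [show f * f' - g * g' = f * (f' - g') + (f - g) * g' by ring]
  exact Dv.add hn (Dv.zmul hn h.1 h'.2.2) (Dv.mul0 hn h.2.2 h'.2.1)

lemma Cg.inv {f g : RatFunc ℚ} (h : Dv n 2 (f - g)) (hf : Dv n 0 f⁻¹) (hg : Dv n 0 g⁻¹)
    (hf0 : f ≠ 0) (hg0 : g ≠ 0) : Cg n f⁻¹ g⁻¹ := by
  refine ⟨hf, hg, ?_⟩
  rw [show f⁻¹ - g⁻¹ = (-(f - g)) * (f⁻¹ * g⁻¹) by field_simp; ring]
  exact Dv.mul0 hn (Dv.neg hn h) (Dv.mul0 hn hf hg)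

lemma Cg.prod {f g : ℕ → RatFunc ℚ} {s : Finset ℕ} (h : ∀ i ∈ s, Cg n (f i) (g i)) :
    Cg n (∏ i ∈ s, f i) (∏ i ∈ s, g i) := by
  induction s using Finset.induction_on with
  | empty => simpa using Cg.refl hn (Dv.one hn)
  | insert a s ha ih =>
    rw [prod_insert ha, prod_insert ha]
    exact Cg.mul hn (h a (mem_insert_self _ _)) (ih fun i hi => h i (mem_insert_of_mem hi))

lemma Dv.quad {x y A B C : RatFunc ℚ} (hx : Dv n 1 (1 - x)) (hy : Dv n 1 (1 - y))
    (hA : Dv n 0 A) (hB : Dv n 0 B) (hC : Dv n 0 C) :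
    Dv n 2 (A * ((1 - x) * (1 - x)) + B * ((1 - x) * (1 - y)) + C * ((1 - y) * (1 - y))) := by
  have hxx : Dv n 2 ((1 - x) * (1 - x)) := Dv.mul (k := 1) (l := 1) hn hx hx
  have hxy : Dv n 2 ((1 - x) * (1 - y)) := Dv.mul (k := 1) (l := 1) hn hx hy
  have hyy : Dv n 2 ((1 - y) * (1 - y)) := Dv.mul (k := 1) (l := 1) hn hy hy
  exact Dv.add hn (Dv.add hn (Dv.zmul hn hA hxx) (Dv.zmul hn hB hxy)) (Dv.zmul hn hC hyy)

lemma num_cong {x y u : RatFunc ℚ} (hx : Dv n 1 (1 - x)) (hy : Dv n 1 (1 - y))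
    (hx0 : Dv n 0 x) (hy0 : Dv n 0 y) (hyi : Dv n 0 y⁻¹) (hu : Dv n 0 u) (hyne : y ≠ 0) :
    Dv n 2 ((1 - x * u) ^ 3 - (1 - x ^ 2 * u) * (1 - x * y * u) * (1 - y⁻¹ * u)) := by
  have h1 := Dv.one hn
  rw [show (1 - x * u) ^ 3 - (1 - x ^ 2 * u) * (1 - x * y * u) * (1 - y⁻¹ * u) =
    (y⁻¹ * (u * y - u * u * x * (y * y))) * ((1 - x) * (1 - x)) +
    (y⁻¹ * (u - u * u * x * (1 - (1 + 1) * (1 - y)))) * ((1 - x) * (1 - y)) +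
    (y⁻¹ * (u * x - u * u * x)) * ((1 - y) * (1 - y)) by field_simp; ring]
  apply Dv.quad hn hx hy <;>
  repeat' first | assumption | apply Dv.mul0 hn | apply Dv.sub hn | apply Dv.add hn

lemma den_cong {x y u : RatFunc ℚ} (hx : Dv n 1 (1 - x)) (hy : Dv n 1 (1 - y))
    (hx0 : Dv n 0 x) (hy0 : Dv n 0 y) (hyi : Dv n 0 y⁻¹) (hu : Dv n 0 u) (hyne : y ≠ 0) :
    Dv n 2 ((1 - x * u) ^ 3 - (1 - u) * (1 - x * y⁻¹ * u) * (1 - x ^ 2 * y * u)) := by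
  have h1 := Dv.one hn
  rw [show (1 - x * u) ^ 3 - (1 - u) * (1 - x * y⁻¹ * u) * (1 - x ^ 2 * y * u) =
    (y⁻¹ * (u * (y * y) - u * u * x * y)) * ((1 - x) * (1 - x)) +
    (y⁻¹ * (u * (1 - (1 + 1) * (1 - y)) - u * u * x)) * ((1 - x) * (1 - y)) +
    (y⁻¹ * (u - u * u * x * x)) * ((1 - y) * (1 - y)) by field_simp; ring]
  apply Dv.quad hn hx hy <;>
  repeat' first | assumption | apply Dv.mul0 hn | apply Dv.sub hn | apply Dv.add hn

end Loc

section Main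

lemma zp4 (e : ℤ) (i : ℕ) : Q ^ e * (Q ^ 4) ^ i = Q ^ (e + 4 * (i : ℤ)) := by
  rw [zpow_add₀ Qne, zpow_mul, zpow_natCast]
  norm_cast

lemma nd1 {n l : ℕ} (hl : n = 4 * l + 3) {i : ℕ} (hi : i + 1 < n) (t : ℤ) :
    ¬ (n : ℤ) ∣ t * n + 4 * ((i + 1 : ℕ) : ℤ) := by
  intro h
  rw [dvd_add_right (dvd_mul_left _ _)] at h
  have h' : n ∣ 4 * (i + 1) := by exact_mod_cast h
  have hc : Nat.Coprime n 4 := by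
    have : Nat.Coprime n 2 := by
      rw [Nat.coprime_two_right]; exact ⟨2 * l + 1, by omega⟩
    exact Nat.Coprime.pow_right 2 this
  have := Nat.le_of_dvd (by omega) (hc.dvd_of_dvd_mul_left h')
  omega

lemma nd2 {n l : ℕ} (hl : n = 4 * l + 3) {i : ℕ} (hi : i < 2 * l + 1) (t : ℤ) :
    ¬ (n : ℤ) ∣ (t * n + 1) + 4 * ((i + 1 : ℕ) : ℤ) := by
  intro h
  rw [add_assoc, dvd_add_right (dvd_mul_left _ _)] at h
  have h' : n ∣ 1 + 4 * (i + 1) := by exact_mod_cast h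
  obtain ⟨c, hc⟩ := h'
  rcases c with _ | _ | c
  · omega
  · omega
  · have : n * (c + 1 + 1) = n * c + 2 * n := by ring
    have h2 : 0 ≤ n * c := Nat.zero_le _
    omega

lemma unitv {n l : ℕ} (hl : n = 4 * l + 3) {i : ℕ} (hi : i + 1 < n) (t : ℤ) :
    Dv n 0 (1 - Q ^ (t * n) * (Q ^ 4) ^ (i + 1))⁻¹ ∧
      (1 - Q ^ (t * n) * (Q ^ 4) ^ (i + 1)) ≠ 0 := by
  have h := nd1 hl hi t
  rw [zp4]
  refine ⟨Dv.subInv (by omega) h, Qz_ne ?_⟩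
  intro h0
  rw [h0] at h
  exact h (dvd_zero _)

noncomputable def aI (x : RatFunc ℚ) (i : ℕ) : RatFunc ℚ :=
  (1 - x * (Q ^ 2 * (Q ^ 4) ^ i)) ^ 3 * ((1 - x * (Q ^ 4) ^ (i + 1)) ^ 3)⁻¹ * Q

lemma dRho_eq (x y P : RatFunc ℚ) (hy : y ≠ 0) (hP : P = y * (Q ^ 2)⁻¹) (i : ℕ) :
    dRho (Q * x) (Q⁻¹ * y⁻¹) (Q ^ 4) P i =
      ((1 - x ^ 2 * (Q ^ 2 * (Q ^ 4) ^ i)) * (1 - x * y * (Q ^ 2 * (Q ^ 4) ^ i)) *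
        (1 - y⁻¹ * (Q ^ 2 * (Q ^ 4) ^ i))) *
      ((1 - (Q ^ 4) ^ (i + 1)) * (1 - x * y⁻¹ * (Q ^ 4) ^ (i + 1)) *
        (1 - x ^ 2 * y * (Q ^ 4) ^ (i + 1)))⁻¹ * Q := by
  have hQ := Qne
  have hden : (1 - (Q ^ 4) ^ (i + 1)) * (1 - (Q * x) ^ 2 * P * (Q ^ 4) ^ (i + 1)) *
      (1 - (Q * x) * (Q⁻¹ * y⁻¹) * (Q ^ 4) ^ (i + 1)) =
      (1 - (Q ^ 4) ^ (i + 1)) * (1 - x * y⁻¹ * (Q ^ 4) ^ (i + 1)) *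
        (1 - x ^ 2 * y * (Q ^ 4) ^ (i + 1)) := by
    have e1 : (Q * x) ^ 2 * P = x ^ 2 * y := by rw [hP]; field_simp
    have e2 : (Q * x) * (Q⁻¹ * y⁻¹) = x * y⁻¹ := by field_simp
    rw [e1, e2]; ring
  rw [dRho, hden, div_eq_mul_inv, hP]
  generalize ((1 - (Q ^ 4) ^ (i + 1)) * (1 - x * y⁻¹ * (Q ^ 4) ^ (i + 1)) *
        (1 - x ^ 2 * y * (Q ^ 4) ^ (i + 1)))⁻¹ = Z
  generalize (Q ^ 4) ^ i = u
  generalize Q = q at *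
  field_simp

lemma block {n l : ℕ} (hl : n = 4 * l + 3) (j : ℕ) :
    Dv n 2 (∑ r ∈ range (2 * l + 1 + 1),
      (1 + Q ^ ((4 * j : ℤ) * n) * Q * (Q ^ 4) ^ r) *
        ∏ i ∈ range r, aI (Q ^ ((4 * j : ℤ) * n)) i) := by
  have hn : 0 < n := by omega
  have hQ := Qne
  set x := Q ^ ((4 * j : ℤ) * n) with hx
  set y := Q ^ ((2 : ℤ) * n) with hy
  have hyne : y ≠ 0 := zpow_ne_zero _ hQ
  have hx1 : Dv n 1 (1 - x) := Dv.sub1 hn (dvd_mul_left _ _)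
  have hy1 : Dv n 1 (1 - y) := Dv.sub1 hn (dvd_mul_left _ _)
  have hx0 : Dv n 0 x := Dv.Qz hn _
  have hy0 : Dv n 0 y := Dv.Qz hn _
  have hyi : Dv n 0 y⁻¹ := by rw [hy, ← zpow_neg]; exact Dv.Qz hn _
  have hQ0 := Dv.Q hn
  have h1 := Dv.one hn
  have hp0 : Dv n 0 (Q ^ 4) := Dv.pow hn hQ0 4
  have hP : (Q ^ 4) ^ (2 * l + 1) = y * (Q ^ 2)⁻¹ := by
    have : (Q ^ 4) ^ (2 * l + 1) * Q ^ 2 = y := by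
      rw [hy, ← pow_mul, ← pow_add]
      rw [← zpow_natCast]
      congr 1
      rw [hl]; push_cast; ring
    rw [← this]; field_simp
  have hs : Q * x = Q ^ ((4 * j : ℤ) * n + 1) := by
    rw [zpow_add₀ hQ, zpow_one, mul_comm]
  have hs2 : (Q * x) ^ 2 = Q ^ ((8 * j : ℤ) * n + 2) := by
    rw [hs, ← zpow_natCast, ← zpow_mul]; congr 1; push_cast; ring
  have hw : Q⁻¹ * y⁻¹ = Q ^ (-1 - 2 * (n : ℤ)) := by
    rw [zpow_sub₀ hQ, zpow_neg_one, div_eq_mul_inv]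
  have hxy : x * y⁻¹ = Q ^ ((4 * j - 2 : ℤ) * n) := by
    rw [hx, hy, ← zpow_neg, ← zpow_add₀ hQ]; congr 1; ring
  have hxxy : x ^ 2 * y = Q ^ ((8 * j + 2 : ℤ) * n) := by
    rw [hx, hy, ← zpow_natCast, ← zpow_mul, ← zpow_add₀ hQ]; congr 1; push_cast; ring
  have hsw : (Q * x) * (Q⁻¹ * y⁻¹) = Q ^ ((4 * j - 2 : ℤ) * n) := by
    rw [← hxy]; field_simp
  -- congruence of the factors
  have hcg : ∀ i, i < 2 * l + 1 →
      Cg n (aI x i) (dRho (Q * x) (Q⁻¹ * y⁻¹) (Q ^ 4) ((Q ^ 4) ^ (2 * l + 1)) i) := by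
    intro i hi
    rw [dRho_eq x y _ hyne hP, aI]
    have hi' : i + 1 < n := by omega
    have hu : Dv n 0 (Q ^ 2 * (Q ^ 4) ^ i) :=
      Dv.mul0 hn (Dv.pow hn hQ0 2) (Dv.pow hn hp0 i)
    have hv : Dv n 0 ((Q ^ 4) ^ (i + 1)) := Dv.pow hn hp0 _
    have hxx : Dv n 0 (x ^ 2) := Dv.pow hn hx0 2
    refine Cg.mul hn (Cg.mul hn ⟨?_, ?_, num_cong hn hx1 hy1 hx0 hy0 hyi hu hyne⟩ ?_)
      (Cg.refl hn hQ0)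
    · apply Dv.pow hn
      exact Dv.sub hn h1 (Dv.mul0 hn hx0 hu)
    · generalize Q ^ 2 * (Q ^ 4) ^ i = u at *
      repeat' first | assumption | apply Dv.mul0 hn | apply Dv.sub hn
    · obtain ⟨u1, n1⟩ := unitv hl hi' (4 * j : ℤ)
      obtain ⟨u2, n2⟩ := unitv hl hi' 0
      obtain ⟨u3, n3⟩ := unitv hl hi' (4 * j - 2 : ℤ)
      obtain ⟨u4, n4⟩ := unitv hl hi' (8 * j + 2 : ℤ)
      rw [← hx] at u1 n1
      rw [← hxy] at u3 n3
      rw [← hxxy] at u4 n4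
      rw [zero_mul, zpow_zero, one_mul] at u2 n2
      refine Cg.inv hn (den_cong hn hx1 hy1 hx0 hy0 hyi hv hyne) ?_ ?_ ?_ ?_
      · rw [← inv_pow]; exact Dv.pow hn u1 3
      · rw [mul_inv, mul_inv]; exact Dv.mul0 hn (Dv.mul0 hn u2 u3) u4
      · exact pow_ne_zero _ n1
      · exact mul_ne_zero (mul_ne_zero n2 n3) n4
  -- the q-Dixon evaluation
  have hdix := dixon (Q * x) (Q⁻¹ * y⁻¹) (Q ^ 4)
    (by
      intro i
      have := zp4 0 (i + 1)
      rw [zpow_zero, one_mul] at this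
      rw [this]
      exact Qz_ne (by push_cast; omega))
    (by
      intro i
      rw [hs2, zp4]
      refine Qz_ne ?_
      positivity)
    (by
      intro i
      rw [hsw, zp4]
      refine Qz_ne ?_
      intro h0
      have e1 : ((4 * j - 2 : ℤ) * n) = 4 * (j * n) - 2 * n := by ring
      rw [e1, hl] at h0
      push_cast at h0
      omega)
    (by
      intro i
      rw [hs, zp4]
      refine Qz_ne ?_
      positivity) (2 * l + 1)
  have hD : Dv n 2 (∑ i ∈ range (2 * l + 1 + 1),
      dT (Q * x) (Q⁻¹ * y⁻¹) (Q ^ 4) ((Q ^ 4) ^ (2 * l + 1)) i) := by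
    rw [hdix]
    simp only [div_eq_mul_inv]
    rw [prod_mul_distrib, prod_mul_distrib]
    refine Dv.zmul hn (Dv.add hn h1 (Dv.mul0 hn hQ0 hx0)) (Dv.mul0 hn
      (Dv.mul (k := 1) (l := 1) hn (Dv.prod1 hn ?_ (2 * l) (by simp) ?_)
        (Dv.prod1 hn ?_ l (by simp; omega) ?_)) (Dv.prod hn ?_))
    · intro i _
      rw [hs2, zp4]; exact Dv.sub0 hn _
    · rw [hs2, zp4]
      apply Dv.sub1 hn
      refine ⟨8 * j + 2, ?_⟩
      rw [hl]; push_cast; ring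
    · intro i _
      rw [hw, zp4]; exact Dv.sub0 hn _
    · rw [hw, zp4]
      apply Dv.sub1 hn
      refine ⟨-1, ?_⟩
      rw [hl]; push_cast; ring
    · intro i hi
      rw [mem_range] at hi
      rw [mul_inv, hsw]
      refine Dv.mul0 hn (unitv hl (by omega) _).1 ?_
      rw [hs, zp4]
      exact Dv.subInv hn (nd2 hl hi _)
  have hdiff : Dv n 2 (∑ r ∈ range (2 * l + 1 + 1),
      ((1 + x * Q * (Q ^ 4) ^ r) * ∏ i ∈ range r, aI x i -
        dT (Q * x) (Q⁻¹ * y⁻¹) (Q ^ 4) ((Q ^ 4) ^ (2 * l + 1)) r)) := by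
    refine Dv.sum hn fun r hr => ?_
    rw [mem_range] at hr
    rw [dT, mul_comm Q x, ← mul_sub, mul_comm x Q]
    refine Dv.zmul hn ?_ (Cg.prod hn (fun i hi => hcg i ?_)).2.2
    · exact Dv.add hn h1 (Dv.mul0 hn (Dv.mul0 hn hQ0 hx0) (Dv.pow hn hp0 r))
    · rw [mem_range] at hi; omega
  rw [sum_sub_distrib] at hdiff
  have := Dv.add hn hdiff hD
  rwa [sub_add_cancel] at this

noncomputable def bI (x : RatFunc ℚ) (i : ℕ) : RatFunc ℚ :=
  (1 - x * (Q ^ 2 * (Q ^ 4) ^ i)) * (1 - x * (Q ^ 4) ^ (i + 1))⁻¹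

noncomputable def wQ (k : ℕ) : RatFunc ℚ := qPoch (Q ^ 2) (Q ^ 4) k * (qPoch (Q ^ 4) (Q ^ 4) k)⁻¹

lemma aI_prod (x : RatFunc ℚ) (r : ℕ) :
    ∏ i ∈ range r, aI x i = (∏ i ∈ range r, bI x i) ^ 3 * Q ^ r := by
  induction r with
  | zero => simp
  | succ r ih =>
    rw [prod_range_succ, prod_range_succ, ih, aI, bI, mul_pow, mul_pow, inv_pow]
    ring

lemma xnat (n j : ℕ) : Q ^ ((4 * j : ℤ) * n) = (Q ^ 4) ^ (j * n) := by
  rw [← pow_mul, ← zpow_natCast]; congr 1; push_cast; ring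

lemma wQ_add (n j r : ℕ) :
    wQ (j * n + r) = wQ (j * n) * ∏ i ∈ range r, bI (Q ^ ((4 * j : ℤ) * n)) i := by
  rw [wQ, wQ, qPoch, qPoch, qPoch, qPoch, prod_range_add, prod_range_add, xnat]
  simp only [bI]
  rw [prod_mul_distrib, prod_inv_distrib]
  have e1 : ∀ i, Q ^ 2 * (Q ^ 4) ^ (j * n + i) = (Q ^ 4) ^ (j * n) * (Q ^ 2 * (Q ^ 4) ^ i) := by
    intro i; rw [pow_add]; ring
  have e2 : ∀ i, Q ^ 4 * (Q ^ 4) ^ (j * n + i) = (Q ^ 4) ^ (j * n) * (Q ^ 4) ^ (i + 1) := by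
    intro i; rw [pow_add, pow_succ]; ring
  simp only [e1, e2, mul_inv]
  ring

lemma bI_dv {n l : ℕ} (hl : n = 4 * l + 3) (j : ℕ) {i : ℕ} (hi : i + 1 < n) :
    Dv n 0 (bI (Q ^ ((4 * j : ℤ) * n)) i) := by
  have hn : 0 < n := by omega
  have hQ0 := Dv.Q hn
  exact Dv.mul0 hn (Dv.sub hn (Dv.one hn) (Dv.mul0 hn (Dv.Qz hn _)
    (Dv.mul0 hn (Dv.pow hn hQ0 2) (Dv.pow hn (Dv.pow hn hQ0 4) i)))) (unitv hl hi _).1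

lemma bI_prod {n l : ℕ} (hl : n = 4 * l + 3) (j : ℕ) {r : ℕ} (hr : 2 * l + 1 < r) (hr' : r < n) :
    Dv n 1 (∏ i ∈ range r, bI (Q ^ ((4 * j : ℤ) * n)) i) := by
  have hn : 0 < n := by omega
  refine Dv.prod1 hn (fun i hi => bI_dv hl j ?_) (2 * l + 1) (by simpa using hr) ?_
  · rw [mem_range] at hi; omega
  · refine Dv.mul0 hn ?_ (unitv hl (by omega) _).1
    have : Q ^ ((4 * j : ℤ) * n) * (Q ^ 2 * (Q ^ 4) ^ (2 * l + 1)) =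
        Q ^ ((4 * j + 2 : ℤ) * n) := by
      rw [xnat, ← pow_mul, ← pow_mul, ← pow_add, ← pow_add, ← zpow_natCast]
      congr 1
      rw [hl]; push_cast; ring
    rw [this]
    exact Dv.sub1 hn (dvd_mul_left _ _)

lemma wQ_dv {n l : ℕ} (hl : n = 4 * l + 3) (j : ℕ) : Dv n 0 (wQ (j * n)) := by
  have hn : 0 < n := by omega
  have hQ0 := Dv.Q hn
  induction j with
  | zero => simpa [wQ, qPoch] using Dv.one hn
  | succ j ih =>
    rw [add_mul, one_mul, wQ_add]
    refine Dv.mul0 hn ih ?_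
    obtain ⟨d, hd⟩ : ∃ d, n = d + 1 := ⟨n - 1, by omega⟩
    have hsplit : ∏ i ∈ range n, bI (Q ^ ((4 * j : ℤ) * n)) i =
        (∏ i ∈ range d, bI (Q ^ ((4 * j : ℤ) * n)) i) * bI (Q ^ ((4 * j : ℤ) * n)) d := by
      have := prod_range_succ (fun i => bI (Q ^ ((4 * j : ℤ) * n)) i) d
      rwa [← hd] at this
    rw [hsplit, bI.eq_def _ d, ← mul_assoc, ← hd]
    have hx : Q ^ ((4 * j : ℤ) * n) * (Q ^ 4) ^ n = Q ^ (4 * (j + 1) * n) := by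
      rw [xnat, ← pow_mul, ← pow_mul, ← pow_add]; congr 1; ring
    rw [hx]
    refine Dv.divSub hn (by positivity) (dvd_mul_left _ _) ?_
    refine Dv.mul0 hn (bI_prod hl j (by omega) (by omega)) ?_
    exact Dv.sub hn (Dv.one hn) (Dv.mul0 hn (Dv.Qz hn _)
      (Dv.mul0 hn (Dv.pow hn hQ0 2) (Dv.pow hn (Dv.pow hn hQ0 4) d)))

noncomputable def sT (k : ℕ) : RatFunc ℚ :=
  (1 + Q ^ (4 * k + 1)) * qPoch (Q ^ 2) (Q ^ 4) k ^ 3 * Q ^ k /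
            ((1 + Q) * qPoch (Q ^ 4) (Q ^ 4) k ^ 3)

lemma sT_eq (n j r : ℕ) : sT (j * n + r) =
    (wQ (j * n) ^ 3 * Q ^ (j * n) * (1 + Q)⁻¹) *
      ((1 + Q ^ ((4 * j : ℤ) * n) * Q * (Q ^ 4) ^ r) *
        ∏ i ∈ range r, aI (Q ^ ((4 * j : ℤ) * n)) i) := by
  have h : sT (j * n + r) = (1 + Q ^ (4 * (j * n + r) + 1)) * wQ (j * n + r) ^ 3 *
      Q ^ (j * n + r) * (1 + Q)⁻¹ := by
    rw [sT, wQ, div_eq_mul_inv, mul_inv, mul_pow, inv_pow]; ring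
  rw [h, wQ_add, aI_prod, xnat]
  have : Q ^ (4 * (j * n + r) + 1) = (Q ^ 4) ^ (j * n) * Q * (Q ^ 4) ^ r := by
    rw [← pow_mul, ← pow_mul]; ring
  rw [this, pow_add, mul_pow]
  ring

lemma pre_dv {n l : ℕ} (hl : n = 4 * l + 3) (j : ℕ) :
    Dv n 0 (wQ (j * n) ^ 3 * Q ^ (j * n) * (1 + Q)⁻¹) := by
  have hn : 0 < n := by omega
  refine Dv.mul0 hn (Dv.mul0 hn (Dv.pow hn (wQ_dv hl j) 3) (Dv.pow hn (Dv.Q hn) _)) ?_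
  have h1 := Qz_ne (e := 1) (by norm_num)
  have h2 := Qz_ne (e := 2) (by norm_num)
  have h3 : Dv n 0 (1 - Q ^ (2 : ℤ))⁻¹ := by
    apply Dv.subInv hn
    intro h
    have := Int.le_of_dvd (by norm_num) h
    omega
  have h4 := Dv.mul0 hn (Dv.sub0 hn 1) h3
  have h5 : (1 - Q ^ (2 : ℤ)) = (1 - Q ^ (1 : ℤ)) * (1 + Q) := by
    rw [zpow_one, zpow_ofNat]; ring
  rw [h5, mul_inv, ← mul_assoc, mul_inv_cancel₀ h1, one_mul] at h4
  exact h4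

lemma block_half {n l : ℕ} (hl : n = 4 * l + 3) (j : ℕ) :
    Dv n 2 (∑ r ∈ range (2 * l + 1 + 1), sT (j * n + r)) := by
  have hn : 0 < n := by omega
  simp only [sT_eq]
  rw [← mul_sum]
  exact Dv.zmul hn (pre_dv hl j) (block hl j)

lemma block_full {n l : ℕ} (hl : n = 4 * l + 3) (j : ℕ) :
    Dv n 2 (∑ r ∈ range n, sT (j * n + r)) := by
  have hn : 0 < n := by omega
  have hQ0 := Dv.Q hn
  have e : range n = range (2 * l + 1 + 1 + (2 * l + 1)) := by congr 1; omega
  rw [e, sum_range_add]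
  refine Dv.add hn (block_half hl j) (Dv.sum hn fun r hr => ?_)
  rw [mem_range] at hr
  rw [sT_eq, aI_prod]
  refine Dv.zmul hn (pre_dv hl j) (Dv.zmul hn ?_ (Dv.mul0 hn ?_ (Dv.pow hn hQ0 _)))
  · exact Dv.add hn (Dv.one hn) (Dv.mul0 hn (Dv.mul0 hn (Dv.Qz hn _) hQ0)
      (Dv.pow hn (Dv.pow hn hQ0 4) _))
  · have hb := bI_prod hl j (r := 2 * l + 1 + 1 + r) (by omega) (by omega)
    have h2 := Dv.mul (k := 1) (l := 1) hn hb hb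
    have h3 := Dv.succ_le (k := 2) (Dv.mul (k := 2) (l := 1) hn h2 hb)
    rwa [show ∀ z : RatFunc ℚ, z * z * z = z ^ 3 from fun z => by ring] at h3

lemma blocks {n l : ℕ} (hl : n = 4 * l + 3) (m : ℕ) :
    Dv n 2 (∑ k ∈ range (m * n), sT k) := by
  have hn : 0 < n := by omega
  induction m with
  | zero => simpa using Dv.zero hn 2
  | succ m ih =>
    rw [add_mul, one_mul, sum_range_add]
    exact Dv.add hn ih (block_full hl m)

end Main

/-- For a nonnegative integer `m` and a positive integer `n ≡ 3 (mod 4)`,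
`∑_{k=0}^{mn+(n-1)/2} (1+q^{4k+1})(q^2;q^4)_k^3 q^k / ((1+q)(q^4;q^4)_k^3) ≡ 0 (mod Φ_n(q)^2)`
in the localization of `ℚ[q]` at `Φ_n(q)`. -/
theorem stmt4 (m n : ℕ) (hn : 0 < n) (h : n % 4 = 3) :
    ∃ a b : Polynomial ℚ, ¬ (Polynomial.cyclotomic n ℚ ∣ b) ∧
      (∑ k ∈ Finset.range (m * n + (n - 1) / 2 + 1),
          (1 + Q ^ (4 * k + 1)) * qPoch (Q ^ 2) (Q ^ 4) k ^ 3 * Q ^ k /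
            ((1 + Q) * qPoch (Q ^ 4) (Q ^ 4) k ^ 3))
        * algebraMap (Polynomial ℚ) (RatFunc ℚ) b
      = algebraMap (Polynomial ℚ) (RatFunc ℚ) (Polynomial.cyclotomic n ℚ ^ 2 * a) := by
  obtain ⟨l, hl⟩ : ∃ l, n = 4 * l + 3 := ⟨n / 4, by omega⟩
  have hN : (n - 1) / 2 = 2 * l + 1 := by omega
  have key : Dv n 2 (∑ k ∈ Finset.range (m * n + (n - 1) / 2 + 1), sT k) := by
    rw [hN, add_assoc, sum_range_add]
    exact Dv.add hn (blocks hl m) (block_half hl m)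
  exact key
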